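/- Let P be a simplicial polytope of dimension d > 1. If P has at least one pair of disjoint facets, then P has at least two pairs of disjoint facets involving four distinct facets, i.e., there exist four distinct facets F, G, F', G' of P such that F ∩ G contains no vertex of P and F' ∩ G' contains no vertex of P. -/

import Mathlib

/-!
The argument is combinatorial, in the style of Lemke and Howson. Identify a facet with its set of
`d` vertices. The only fact about polytopes that is used is that every set of `d - 1` vertices lies
in zero or exactly two facets (`IsFacet.exists_unique_neighbour`).

Let `F`, `G` be disjoint facets, `v ∈ F` and `U = (F ∪ G) \ {v}`, a set of `2d - 1` vertices.
Consider the pairs `(A, B)` of facets with `B ⊆ U` and `U \ B ⊆ A`. For fixed `B` the set `U \ B`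
has `d - 1` elements, so there are zero or two choices of `A`; the number of pairs is even. The
pairs with `A ∩ B ≠ ∅` satisfy `A ∪ B = U`, a condition symmetric in `A` and `B`, and `A ≠ B` because
`2d - 1 > d`; so they are even in number too. Hence the disjoint pairs are even in number, and since
`(F, G)` is one, there is another, `(A, B)` (`exists_second_pair`).

If `{A, B}` and `{F, G}` have no common member, the result follows. Otherwise counting forces
`B = G`, and `A` is a facet other than `F` that contains `F \ {v}` and misses `G`. Exchanging the
roles of `F` and `G` gives a facet `B' ≠ G` that contains all but one vertex of `G` and misses `F`.
Then `{A, G}` and `{B', F}` are the required pairs.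
-/

/-- `P` is a polytope: the convex hull of finitely many points. -/
def IsPolytope {n : ℕ} (P : Set (Fin n → ℝ)) : Prop :=
  ∃ S : Finset (Fin n → ℝ), P = convexHull ℝ (S : Set (Fin n → ℝ))

/-- A face of `P`: the empty set, `P` itself, or the intersection of `P`
with a supporting hyperplane. -/
def IsFace {n : ℕ} (P F : Set (Fin n → ℝ)) : Prop :=
  F = ∅ ∨ F = P ∨ ∃ (f : (Fin n → ℝ) →ₗ[ℝ] ℝ) (c : ℝ),
    (∀ x ∈ P, f x ≤ c) ∧ F = {x ∈ P | f x = c}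

/-- The dimension of a subset of `ℝⁿ`: the rank of its vector span
(i.e., its affine dimension). -/
noncomputable def sdim {n : ℕ} (F : Set (Fin n → ℝ)) : ℕ :=
  Module.finrank ℝ ↥(vectorSpan ℝ F)

/-- A vertex of `P`: a point whose singleton is a (0-dimensional) face of `P`. -/
def IsVertex {n : ℕ} (P : Set (Fin n → ℝ)) (v : Fin n → ℝ) : Prop :=
  IsFace P {v}

/-- A facet of `P`: a nonempty face of dimension `dim P - 1`. -/
def IsFacet {n : ℕ} (P F : Set (Fin n → ℝ)) : Prop :=
  IsFace P F ∧ F.Nonempty ∧ sdim F + 1 = sdim P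

/-- An edge of `P`: a face of dimension 1. -/
def IsEdge {n : ℕ} (P F : Set (Fin n → ℝ)) : Prop :=
  IsFace P F ∧ sdim F = 1

/-- Two vertices are adjacent if they are joined by an edge. -/
def Adjacent {n : ℕ} (P : Set (Fin n → ℝ)) (u v : Fin n → ℝ) : Prop :=
  u ≠ v ∧ ∃ F, IsEdge P F ∧ u ∈ F ∧ v ∈ F

/-- A polytope is simple if every vertex belongs to precisely `dim P` facets. -/
def IsSimplePolytope {n : ℕ} (P : Set (Fin n → ℝ)) : Prop :=
  ∀ v, IsVertex P v → {F | IsFacet P F ∧ v ∈ F}.ncard = sdim P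

/-- A polytope is simplicial if every facet contains precisely `dim P` vertices. -/
def IsSimplicialPolytope {n : ℕ} (P : Set (Fin n → ℝ)) : Prop :=
  ∀ F, IsFacet P F → {v | IsVertex P v ∧ v ∈ F}.ncard = sdim P

/-- Two vertices are complementary if no facet contains both. -/
def Complementary {n : ℕ} (P : Set (Fin n → ℝ)) (u v : Fin n → ℝ) : Prop :=
  ∀ F, IsFacet P F → ¬ (u ∈ F ∧ v ∈ F)

/-- `J` is the join `F ∨ G`: the smallest face of `P` containing both `F` and `G`. -/
def IsJoin {n : ℕ} (P F G J : Set (Fin n → ℝ)) : Prop :=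
  IsFace P J ∧ F ⊆ J ∧ G ⊆ J ∧ ∀ J', IsFace P J' → F ⊆ J' → G ⊆ J' → J ⊆ J'

/-! ### Pairs of disjoint members in a uniform family -/

/-- A finite set closed under swapping coordinates and missing the diagonal has even size. -/
lemma even_card_of_swap {β : Type*} [DecidableEq β] (s : Finset (β × β))
    (hs : ∀ p ∈ s, p.swap ∈ s) (hne : ∀ p ∈ s, p.1 ≠ p.2) : Even s.card := by
  have h : (∑ _p ∈ s, (1 : ZMod 2)) = 0 := by
    refine Finset.sum_involution (fun p _ => p.swap) (fun _ _ => by decide) ?_ hs ?_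
    · intro p hp _ h
      exact hne p hp (congrArg Prod.snd h)
    · intro p _
      exact p.swap_swap
  rw [Finset.sum_const, nsmul_one] at h
  exact (ZMod.natCast_eq_zero_iff_even).1 h

/-- The parity core. In a `d`-uniform family in which every `(d-1)`-set lies in an even number of
members, a disjoint pair `(F, G)` and `v ∈ F` force a second disjoint pair `(A, B)` covering
`(F ∪ G) \ {v}` with `v ∉ B`. -/
lemma exists_second_pair {α : Type*} [DecidableEq α] {d : ℕ} (hd : 1 < d)
    (C : Finset (Finset α)) (hcard : ∀ A ∈ C, A.card = d)
    (heven : ∀ R : Finset α, R.card + 1 = d → Even (C.filter (fun A => R ⊆ A)).card)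
    {F G : Finset α} (hF : F ∈ C) (hG : G ∈ C) (hFG : Disjoint F G) {v : α} (hv : v ∈ F) :
    ∃ A ∈ C, ∃ B ∈ C, Disjoint A B ∧ B ⊆ (F ∪ G).erase v ∧ (F ∪ G).erase v \ B ⊆ A ∧
      ¬ (A = F ∧ B = G) := by
  set U := (F ∪ G).erase v with hU
  have hvG : v ∉ G := Finset.disjoint_left.1 hFG hv
  have hUcard : U.card + 1 = d + d := by
    rw [hU, Finset.card_erase_add_one (Finset.mem_union_left _ hv),
      Finset.card_union_of_disjoint hFG, hcard F hF, hcard G hG]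
  have hGU : G ⊆ U := fun x hx =>
    Finset.mem_erase.2 ⟨fun h => hvG (h ▸ hx), Finset.mem_union_right _ hx⟩
  set D : Finset (Finset α × Finset α) :=
    (C ×ˢ C).filter (fun p => p.2 ⊆ U ∧ U \ p.2 ⊆ p.1) with hD
  have hsd : ∀ B ∈ C, B ⊆ U → (U \ B).card + 1 = d := by
    intro B hB hBU
    have := Finset.card_sdiff_add_card_eq_card hBU
    have := hcard B hB
    omega
  -- Group the pairs by `B`: each fibre consists of the members containing the ridge `U \ B`.
  have hDeven : Even D.card := by
    rw [Finset.card_eq_sum_card_fiberwise (f := Prod.snd) (t := C)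
      (fun p hp => (Finset.mem_product.1 (Finset.mem_filter.1 hp).1).2)]
    refine Finset.even_sum _ fun B hB => ?_
    by_cases hBU : B ⊆ U
    · have key := heven (U \ B) (hsd B hB hBU)
      have : (D.filter (fun p => p.2 = B)).card = (C.filter (fun A => U \ B ⊆ A)).card := by
        refine Finset.card_bij' (fun p _ => p.1) (fun A _ => (A, B)) ?_ ?_ ?_ ?_
        · rintro ⟨A, B'⟩ h
          simp only [hD, Finset.mem_filter, Finset.mem_product] at h ⊢
          obtain ⟨⟨⟨h1, _⟩, _, h3⟩, rfl⟩ := h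
          exact ⟨h1, h3⟩
        · intro A h
          simp only [hD, Finset.mem_filter, Finset.mem_product] at h ⊢
          exact ⟨⟨⟨h.1, hB⟩, hBU, h.2⟩, trivial⟩
        · rintro ⟨A, B'⟩ h
          simp only [Finset.mem_filter] at h
          simp [h.2]
        · intro A _
          rfl
      rw [this]
      exact key
    · have : D.filter (fun p => p.2 = B) = ∅ := by
        refine Finset.filter_eq_empty_iff.2 ?_
        intro p hp hpB
        simp only [hD, Finset.mem_filter] at hp
        exact hBU (hpB ▸ hp.2.1)
      rw [this]
      simp
  -- The pairs that meet are symmetric under exchanging the two members.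
  have hNeven : Even (D.filter (fun p => ¬ Disjoint p.1 p.2)).card := by
    refine even_card_of_swap _ ?_ ?_
    · rintro ⟨A, B⟩ h
      simp only [hD, Finset.mem_filter, Finset.mem_product, Prod.swap] at h ⊢
      obtain ⟨⟨⟨hA, hB⟩, hBU, hR⟩, hdis⟩ := h
      obtain ⟨x, hxA, hxB⟩ := Finset.not_disjoint_iff.1 hdis
      have hAeq : insert x (U \ B) = A := by
        refine Finset.eq_of_subset_of_card_le (Finset.insert_subset hxA hR) ?_
        rw [Finset.card_insert_of_notMem (by simp [hxB]), hsd B hB hBU, hcard A hA]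
      refine ⟨⟨⟨hB, hA⟩, ?_, ?_⟩, fun h => hdis h.symm⟩
      · rw [← hAeq]
        exact Finset.insert_subset (hBU hxB) Finset.sdiff_subset
      · intro y hy
        rw [Finset.mem_sdiff] at hy
        by_contra hyB
        exact hy.2 (hR (Finset.mem_sdiff.2 ⟨hy.1, hyB⟩))
    · rintro ⟨A, B⟩ h (rfl : A = B)
      simp only [hD, Finset.mem_filter, Finset.mem_product] at h
      obtain ⟨⟨⟨hA, _⟩, hAU, hR⟩, _⟩ := h
      have h1 := Finset.card_le_card hR
      have h2 := hsd A hA hAU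
      have h3 : U ⊆ A := fun y hy => by
        by_contra hyA
        exact hyA (hR (Finset.mem_sdiff.2 ⟨hy, hyA⟩))
      have h4 := Finset.card_le_card h3
      have h5 := hcard A hA
      omega
  have hXeven : Even (D.filter (fun p => Disjoint p.1 p.2)).card := by
    have := Finset.card_filter_add_card_filter_not (s := D) (fun p => Disjoint p.1 p.2)
    rw [← this] at hDeven
    exact (Nat.even_add.1 hDeven).2 hNeven
  have hmem : (F, G) ∈ D.filter (fun p => Disjoint p.1 p.2) := by
    simp only [hD, Finset.mem_filter, Finset.mem_product]
    refine ⟨⟨⟨hF, hG⟩, hGU, ?_⟩, hFG⟩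
    intro x hx
    simp only [hU, Finset.mem_sdiff, Finset.mem_erase, Finset.mem_union] at hx
    tauto
  have hone : 1 < (D.filter (fun p => Disjoint p.1 p.2)).card := by
    have := Finset.card_pos.2 ⟨_, hmem⟩
    rcases hXeven with ⟨k, hk⟩
    omega
  obtain ⟨⟨A, B⟩, hAB, hne⟩ := Finset.exists_mem_ne hone (F, G)
  simp only [hD, Finset.mem_filter, Finset.mem_product] at hAB
  exact ⟨A, hAB.1.1.1, B, hAB.1.1.2, hAB.2, hAB.1.2.1, hAB.1.2.2,
    fun h => hne (Prod.ext h.1 h.2)⟩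

/-- Either the second disjoint pair shares no member with `{F, G}`, or some member other than `F`
contains `F \ {v}` and misses `G`. -/
lemma second_pair_cases {α : Type*} [DecidableEq α] {d : ℕ} (hd : 1 < d)
    (C : Finset (Finset α)) (hcard : ∀ A ∈ C, A.card = d)
    (heven : ∀ R : Finset α, R.card + 1 = d → Even (C.filter (fun A => R ⊆ A)).card)
    {F G : Finset α} (hF : F ∈ C) (hG : G ∈ C) (hFG : Disjoint F G) {v : α} (hv : v ∈ F) :
    (∃ A ∈ C, ∃ B ∈ C, Disjoint A B ∧ F ≠ A ∧ F ≠ B ∧ G ≠ A ∧ G ≠ B) ∨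
    (∃ A ∈ C, Disjoint A G ∧ A ≠ F ∧ F.erase v ⊆ A) := by
  obtain ⟨A, hA, B, hB, hAB, hBU, hR, hne⟩ :=
    exists_second_pair hd C hcard heven hF hG hFG hv
  have hcF := hcard F hF
  have hcG := hcard G hG
  have hcB := hcard B hB
  by_cases h1 : B = G
  · subst h1
    right
    refine ⟨A, hA, hAB, fun h => hne ⟨h, rfl⟩, fun x hx => hR ?_⟩
    rw [Finset.mem_erase] at hx
    simp only [Finset.mem_sdiff, Finset.mem_erase, Finset.mem_union]
    exact ⟨⟨hx.1, Or.inl hx.2⟩, Finset.disjoint_left.1 hFG hx.2⟩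
  left
  refine ⟨A, hA, B, hB, hAB, ?_, ?_, ?_, fun h => h1 h.symm⟩
  · rintro rfl
    refine h1 (Finset.eq_of_subset_of_card_le (fun x hx => ?_) (by omega))
    have h2 := Finset.mem_union.1 (Finset.mem_erase.1 (hBU hx)).2
    exact h2.resolve_left (Finset.disjoint_right.1 hAB hx)
  · rintro rfl
    exact (Finset.mem_erase.1 (hBU hv)).1 rfl
  · rintro rfl
    have h2 : B ⊆ F.erase v := fun x hx => by
      have h3 := Finset.mem_erase.1 (hBU hx)
      exact Finset.mem_erase.2 ⟨h3.1,
        (Finset.mem_union.1 h3.2).resolve_right (Finset.disjoint_right.1 hAB hx)⟩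
    have h3 := Finset.card_le_card h2
    have h4 := Finset.card_erase_add_one hv
    omega

lemma exists_two_pairs {α : Type*} [DecidableEq α] {d : ℕ} (hd : 1 < d)
    (C : Finset (Finset α)) (hcard : ∀ A ∈ C, A.card = d)
    (heven : ∀ R : Finset α, R.card + 1 = d → Even (C.filter (fun A => R ⊆ A)).card)
    {F G : Finset α} (hF : F ∈ C) (hG : G ∈ C) (hFG : Disjoint F G) :
    ∃ F₁ ∈ C, ∃ G₁ ∈ C, ∃ F₂ ∈ C, ∃ G₂ ∈ C, Disjoint F₁ G₁ ∧ Disjoint F₂ G₂ ∧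
      F₁ ≠ G₁ ∧ F₁ ≠ F₂ ∧ F₁ ≠ G₂ ∧ G₁ ≠ F₂ ∧ G₁ ≠ G₂ ∧ F₂ ≠ G₂ := by
  have hne : ∀ A ∈ C, ∀ B ∈ C, Disjoint A B → A ≠ B := by
    rintro A hA B - hAB rfl
    have := hcard A hA
    rw [disjoint_self.1 hAB] at this
    simp at this
    omega
  have hcF := hcard F hF
  have hcG := hcard G hG
  obtain ⟨v, hv⟩ : F.Nonempty := Finset.card_pos.1 (by omega)
  obtain ⟨u, hu⟩ : G.Nonempty := Finset.card_pos.1 (by omega)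
  rcases second_pair_cases hd C hcard heven hF hG hFG hv with
    ⟨A, hA, B, hB, hAB, h1, h2, h3, h4⟩ | ⟨A, hA, hAG, hAF, hsub⟩
  · exact ⟨F, hF, G, hG, A, hA, B, hB, hFG, hAB, hne _ hF _ hG hFG, h1, h2, h3, h4,
      hne _ hA _ hB hAB⟩
  rcases second_pair_cases hd C hcard heven hG hF hFG.symm hu with
    ⟨A', hA', B, hB, hAB, h1, h2, h3, h4⟩ | ⟨B, hB, hBF, hBG, hsub'⟩
  · exact ⟨F, hF, G, hG, A', hA', B, hB, hFG, hAB, hne _ hF _ hG hFG, h3, h4, h1, h2,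
      hne _ hA' _ hB hAB⟩
  refine ⟨A, hA, G, hG, B, hB, F, hF, hAG, hBF, hne _ hA _ hG hAG, ?_, hAF, hBG.symm,
    (hne _ hF _ hG hFG).symm, hne _ hB _ hF hBF⟩
  -- `B` contains a point of `G`, because `G` has at least two points, while `A` misses `G`.
  rintro rfl
  obtain ⟨x, hx⟩ : (G.erase u).Nonempty := Finset.card_pos.1 (by
    have := Finset.card_erase_add_one hu
    omega)
  exact Finset.disjoint_left.1 hAG (hsub' hx) (Finset.mem_erase.1 hx).2

/-! ### Faces and facets of polytopes -/

lemma vectorSpan_le_ker_of_const {n : ℕ} {A : Set (Fin n → ℝ)} (k : (Fin n → ℝ) →ₗ[ℝ] ℝ) (e : ℝ)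
    (h : ∀ x ∈ A, k x = e) : vectorSpan ℝ A ≤ LinearMap.ker k := by
  refine Submodule.span_le.2 ?_
  rintro _ ⟨x, hx, y, hy, rfl⟩
  simp [h x hx, h y hy]

lemma sdim_lt_of_const {n : ℕ} {A B : Set (Fin n → ℝ)} (hAB : A ⊆ B)
    (k : (Fin n → ℝ) →ₗ[ℝ] ℝ) (e : ℝ) (h : ∀ x ∈ A, k x = e)
    {x y : Fin n → ℝ} (hx : x ∈ B) (hy : y ∈ B) (hxy : k x ≠ k y) : sdim A < sdim B := by
  refine Submodule.finrank_lt_finrank_of_lt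
    (lt_of_le_of_ne (vectorSpan_mono ℝ hAB) fun heq => hxy ?_)
  have h1 : x - y ∈ vectorSpan ℝ A := by
    rw [heq]
    exact vsub_mem_vectorSpan ℝ hx hy
  have h2 := vectorSpan_le_ker_of_const k e h h1
  rw [LinearMap.mem_ker, map_sub] at h2
  linarith

lemma sdim_convexHull {n : ℕ} (A : Set (Fin n → ℝ)) : sdim (convexHull ℝ A) = sdim A := by
  unfold sdim
  rw [← direction_affineSpan, affineSpan_convexHull, direction_affineSpan]

lemma le_on_convexHull {n : ℕ} {A : Set (Fin n → ℝ)} (k : (Fin n → ℝ) →ₗ[ℝ] ℝ) (e : ℝ)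
    (h : ∀ x ∈ A, k x ≤ e) : ∀ x ∈ convexHull ℝ A, k x ≤ e :=
  fun _ hx => convexHull_min h (convex_halfSpace_le k.isLinear e) hx

lemma eq_on_convexHull {n : ℕ} {A : Set (Fin n → ℝ)} (k : (Fin n → ℝ) →ₗ[ℝ] ℝ) (e : ℝ)
    (h : ∀ x ∈ A, k x = e) : ∀ x ∈ convexHull ℝ A, k x = e :=
  fun _ hx => convexHull_min h (convex_hyperplane k.isLinear e) hx

/-- A face of a convex hull is the hull of the generators it contains: a convex combination on
which a bounded functional is maximal gives no weight to generators below the maximum. -/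
lemma IsFace.eq_convexHull {n : ℕ} {V : Finset (Fin n → ℝ)} {F : Set (Fin n → ℝ)}
    (hF : IsFace (convexHull ℝ (V : Set (Fin n → ℝ))) F) :
    F = convexHull ℝ {x | x ∈ V ∧ x ∈ F} := by
  rcases hF with rfl | rfl | ⟨f, c, hc, rfl⟩
  · simp
  · congr 1
    ext x
    simp only [Finset.mem_coe, Set.mem_ofPred_eq]
    exact ⟨fun h => ⟨h, subset_convexHull ℝ _ h⟩, fun h => h.1⟩
  apply Set.Subset.antisymm
  · rintro x ⟨hx, hxc⟩
    obtain ⟨w, hw0, hw1, hwx⟩ := Finset.mem_convexHull'.1 hx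
    have hsum : ∑ y ∈ V, w y * (c - f y) = 0 := by
      have h1 : ∑ y ∈ V, w y * f y = c := by
        rw [← hxc, ← hwx, map_sum]
        simp
      simp only [mul_sub, Finset.sum_sub_distrib, ← Finset.sum_mul, hw1, h1]
      ring
    have hle : ∀ y ∈ V, f y ≤ c := fun y hy => hc y (subset_convexHull ℝ _ hy)
    have hz := (Finset.sum_eq_zero_iff_of_nonneg
      (fun y hy => mul_nonneg (hw0 y hy) (sub_nonneg.2 (hle y hy)))).1 hsum
    have hnot : ∀ y ∈ V, w y ≠ 0 → f y = c := fun y hy hwy => by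
      have := (mul_eq_zero.1 (hz y hy)).resolve_left hwy
      linarith
    classical
    have hw1' : ∑ y ∈ V.filter (fun y => f y = c), w y = 1 := by
      rw [← hw1]
      exact Finset.sum_filter_of_ne hnot
    have hwx' : ∑ y ∈ V.filter (fun y => f y = c), w y • y = x := by
      rw [← hwx]
      exact Finset.sum_filter_of_ne fun y hy h => hnot y hy fun h0 => h (by rw [h0, zero_smul])
    rw [← hwx']
    refine (convex_convexHull ℝ _).sum_mem (fun y hy => hw0 y (Finset.mem_filter.1 hy).1) hw1' ?_
    intro y hy
    rw [Finset.mem_filter] at hy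
    exact subset_convexHull ℝ _ ⟨hy.1, subset_convexHull ℝ _ hy.1, hy.2⟩
  · intro x hx
    refine ⟨convexHull_mono (fun y hy => hy.1) hx, ?_⟩
    exact eq_on_convexHull f c (fun y hy => hy.2.2) x hx

/-- A polytope is the convex hull of its vertices, which are finite in number: in a minimal
generating set every point is strictly separated from the hull of the others. -/
lemma IsPolytope.exists_vertices {n : ℕ} {P : Set (Fin n → ℝ)} (hP : IsPolytope P) :
    ∃ V : Finset (Fin n → ℝ), P = convexHull ℝ (V : Set (Fin n → ℝ)) ∧
      ∀ v, IsVertex P v ↔ v ∈ V := by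
  classical
  obtain ⟨V, hV, hmin⟩ := exists_minimal_of_wellFoundedLT
    (fun S : Finset (Fin n → ℝ) => P = convexHull ℝ (S : Set (Fin n → ℝ))) hP
  refine ⟨V, hV, fun v => ⟨fun hv => ?_, fun hv => ?_⟩⟩
  · unfold IsVertex at hv
    rw [hV] at hv
    have h1 := hv.eq_convexHull
    by_contra hvV
    have h2 : {x | x ∈ V ∧ x ∈ ({v} : Set (Fin n → ℝ))} = ∅ := by
      ext x
      simp only [Set.mem_ofPred_eq, Set.mem_singleton_iff, Set.mem_empty_iff_false, iff_false]
      rintro ⟨h, rfl⟩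
      exact hvV h
    rw [h2, convexHull_empty] at h1
    exact Set.singleton_ne_empty v h1
  · have hnot : v ∉ convexHull ℝ ((V.erase v : Finset _) : Set (Fin n → ℝ)) := by
      intro hmem
      have hVe : P = convexHull ℝ ((V.erase v : Finset _) : Set (Fin n → ℝ)) := by
        rw [hV]
        refine Set.Subset.antisymm (convexHull_min ?_ (convex_convexHull ℝ _))
          (convexHull_mono (by exact_mod_cast Finset.erase_subset v V))
        intro x hx
        by_cases hxv : x = v
        · rwa [hxv]
        · exact subset_convexHull ℝ _ (Finset.mem_coe.2 (Finset.mem_erase.2 ⟨hxv, hx⟩))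
      exact Finset.notMem_erase v V (hmin hVe (Finset.erase_subset v V) hv)
    obtain ⟨f, u, hfu, huv⟩ := geometric_hahn_banach_closed_point (convex_convexHull ℝ _)
      (Set.Finite.isClosed_convexHull ℝ (Finset.finite_toSet _)) hnot
    have hlt : ∀ x ∈ V, x ≠ v → f x < f v := fun x hx hxv =>
      (hfu x (subset_convexHull ℝ _ (Finset.mem_coe.2 (Finset.mem_erase.2 ⟨hxv, hx⟩)))).trans huv
    have hle : ∀ x ∈ P, (f : (Fin n → ℝ) →ₗ[ℝ] ℝ) x ≤ f v := by
      rw [hV]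
      refine le_on_convexHull _ _ fun x hx => ?_
      by_cases hxv : x = v
      · rw [hxv]
        rfl
      · exact (hlt x hx hxv).le
    have hface : IsFace P {x ∈ P | (f : (Fin n → ℝ) →ₗ[ℝ] ℝ) x = f v} :=
      Or.inr (Or.inr ⟨f, f v, hle, rfl⟩)
    have heq : {x ∈ P | (f : (Fin n → ℝ) →ₗ[ℝ] ℝ) x = f v} = {v} := by
      have h1 := hface
      rw [hV] at h1
      have h2 := h1.eq_convexHull
      rw [← hV] at h2
      rw [h2]
      have h3 : {x | x ∈ V ∧ x ∈ {x ∈ P | (f : (Fin n → ℝ) →ₗ[ℝ] ℝ) x = f v}} = {v} := by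
        ext x
        simp only [Set.mem_ofPred_eq, Set.mem_singleton_iff]
        constructor
        · rintro ⟨hx, -, hxf⟩
          by_contra hxv
          exact absurd hxf (hlt x hx hxv).ne
        · rintro rfl
          exact ⟨hv, hV ▸ subset_convexHull ℝ _ hv, rfl⟩
      rw [h3, convexHull_singleton]
    rw [heq] at hface
    exact hface

lemma IsFacet.exists_functional {n : ℕ} {P F : Set (Fin n → ℝ)} (hF : IsFacet P F) :
    ∃ (f : (Fin n → ℝ) →ₗ[ℝ] ℝ) (c : ℝ), (∀ x ∈ P, f x ≤ c) ∧ F = {x ∈ P | f x = c} := by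
  obtain ⟨h | h | h, hne, hdim⟩ := hF
  · exact absurd h hne.ne_empty
  · rw [h] at hdim
    omega
  · exact h

/-- A facet together with one further point affinely spans the polytope, so an affine relation
holding there holds on the whole polytope. -/
lemma IsFacet.eq_on_of_eq {n : ℕ} {P F : Set (Fin n → ℝ)} (hF : IsFacet P F)
    {z : Fin n → ℝ} (hz : z ∈ P) (hzF : z ∉ F) (k : (Fin n → ℝ) →ₗ[ℝ] ℝ) (e : ℝ)
    (hkF : ∀ x ∈ F, k x = e) (hkz : k z = e) : ∀ x ∈ P, k x = e := by
  obtain ⟨f, c, hc, hFeq⟩ := hF.exists_functional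
  obtain ⟨y, hy⟩ := hF.2.1
  have hFP : F ⊆ P := hFeq ▸ fun x hx => hx.1
  have hFf : ∀ x ∈ F, f x = c := fun x hx => by
    rw [hFeq] at hx
    exact hx.2
  have hzf : f z ≠ f y := fun h => hzF (by
    rw [hFeq]
    exact ⟨hz, h.trans (hFf y hy)⟩)
  have h1 : sdim F < sdim (insert z F) :=
    sdim_lt_of_const (Set.subset_insert z F) f c hFf (Set.mem_insert z F)
      (Set.mem_insert_of_mem z hy) hzf
  have h2 : vectorSpan ℝ (insert z F) = vectorSpan ℝ P := by
    refine Submodule.eq_of_le_of_finrank_le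
      (vectorSpan_mono ℝ (Set.insert_subset hz hFP)) ?_
    have h3 := hF.2.2
    unfold sdim at h1 h3
    omega
  intro x hx
  have h3 : x - z ∈ vectorSpan ℝ (insert z F) := by
    rw [h2]
    exact vsub_mem_vectorSpan ℝ hx hz
  have h4 := vectorSpan_le_ker_of_const k e (A := insert z F) (by
    rintro t (rfl | ht)
    · exact hkz
    · exact hkF t ht) h3
  rw [LinearMap.mem_ker, map_sub] at h4
  linarith

/-- Each ridge `A \ {v}` of a facet with vertex set `A` lies in exactly one further facet. The
second facet is found by tilting the supporting hyperplane about the ridge until it meets a new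
vertex. -/
lemma IsFacet.exists_unique_neighbour {n d : ℕ} (hd : 1 < d) {P : Set (Fin n → ℝ)}
    {V : Finset (Fin n → ℝ)} (hPV : P = convexHull ℝ (V : Set (Fin n → ℝ)))
    (hdim : sdim P = d) {F : Set (Fin n → ℝ)} (hF : IsFacet P F)
    (hmax : ∀ F₁ F₂, IsFacet P F₁ → IsFacet P F₂ → F₁ ⊆ F₂ → F₁ = F₂)
    {A : Finset (Fin n → ℝ)} (hA : ∀ x, x ∈ A ↔ x ∈ V ∧ x ∈ F) (hAc : A.card = d)
    {v : Fin n → ℝ} (hv : v ∈ A) :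
    ∃ F', IsFacet P F' ∧ F' ≠ F ∧ (A.erase v : Set (Fin n → ℝ)) ⊆ F' ∧
      ∀ F'', IsFacet P F'' → F'' ≠ F → (A.erase v : Set (Fin n → ℝ)) ⊆ F'' → F'' = F' := by
  obtain ⟨f, c, hc, hFeq⟩ := hF.exists_functional
  have hVP : ∀ x ∈ V, x ∈ P := fun x hx => hPV ▸ subset_convexHull ℝ _ hx
  have hFA : F = convexHull ℝ (A : Set (Fin n → ℝ)) := by
    have h1 := hF.1
    rw [hPV] at h1
    have h2 := h1.eq_convexHull
    have h3 : {x | x ∈ V ∧ x ∈ F} = (A : Set (Fin n → ℝ)) := by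
      ext x
      exact (hA x).symm
    rwa [h3] at h2
  have hFf : ∀ x ∈ F, f x = c := fun x hx => by
    rw [hFeq] at hx
    exact hx.2
  have hAf : ∀ x ∈ A, f x = c := fun x hx => hFf x ((hA x).1 hx).2
  have hAP : ∀ x ∈ A, x ∈ P := fun x hx => hVP x ((hA x).1 hx).1
  set R := A.erase v with hR
  have hRA : ∀ x ∈ R, x ∈ A := fun x hx => Finset.mem_of_mem_erase hx
  have hRc : R.card + 1 = d := by rw [hR, Finset.card_erase_add_one hv, hAc]
  obtain ⟨p, hp⟩ : R.Nonempty := Finset.card_pos.1 (by omega)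
  have hins : insert v (R : Set (Fin n → ℝ)) = (A : Set (Fin n → ℝ)) := by
    rw [hR, ← Finset.coe_insert, Finset.insert_erase hv]
  have hdF : sdim (A : Set (Fin n → ℝ)) + 1 = d := by
    rw [← sdim_convexHull, ← hFA, ← hdim]
    exact hF.2.2
  have hdR : sdim (R : Set (Fin n → ℝ)) + 2 ≤ d := by
    have := finrank_vectorSpan_image_finset_le ℝ (id : (Fin n → ℝ) → _) R (n := d - 2) (by omega)
    rw [Finset.image_id] at this
    unfold sdim
    omega
  have hdR' : d ≤ sdim (R : Set (Fin n → ℝ)) + 2 := by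
    have := finrank_vectorSpan_insert_le_set ℝ (R : Set (Fin n → ℝ)) v
    rw [hins] at this
    unfold sdim at hdF ⊢
    omega
  -- An affine function `x ↦ ψ x - ψ p` that is `0` on the ridge and `1` at `v`.
  obtain ⟨ψ, hψR, hψv⟩ : ∃ ψ : (Fin n → ℝ) →ₗ[ℝ] ℝ, (∀ x ∈ R, ψ x = ψ p) ∧ ψ v = ψ p + 1 := by
    have hnot : v - p ∉ vectorSpan ℝ (R : Set (Fin n → ℝ)) := by
      intro h
      have h1 : v ∈ affineSpan ℝ (R : Set (Fin n → ℝ)) := by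
        rw [← AffineSubspace.vsub_right_mem_direction_iff_mem
          (mem_affineSpan ℝ (Finset.mem_coe.2 hp)), direction_affineSpan]
        exact h
      have h2 := vectorSpan_insert_eq_vectorSpan h1
      rw [hins] at h2
      unfold sdim at hdF hdR
      rw [h2] at hdF
      omega
    obtain ⟨φ, hφ, hker⟩ := Submodule.exists_le_ker_of_notMem hnot
    refine ⟨(φ (v - p))⁻¹ • φ, fun x hx => ?_, ?_⟩
    · have h1 := hker (vsub_mem_vectorSpan ℝ (Finset.mem_coe.2 hx) (Finset.mem_coe.2 hp))
      rw [LinearMap.mem_ker, vsub_eq_sub, map_sub, sub_eq_zero] at h1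
      simp [h1]
    · have h1 : (φ (v - p))⁻¹ * φ (v - p) = 1 := inv_mul_cancel₀ hφ
      rw [LinearMap.smul_apply, LinearMap.smul_apply, smul_eq_mul, smul_eq_mul]
      nth_rewrite 2 [map_sub] at h1
      linarith
  have hVA : (V \ A).Nonempty := by
    by_contra hemp
    rw [Finset.not_nonempty_iff_eq_empty, Finset.sdiff_eq_empty_iff_subset] at hemp
    have h1 : P ⊆ F := by
      rw [hPV, hFA]
      exact convexHull_mono (by exact_mod_cast hemp)
    have h2 : F = P := Set.Subset.antisymm (hFeq ▸ fun x hx => hx.1) h1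
    have h3 := hF.2.2
    rw [h2] at h3
    omega
  have hpos : ∀ x ∈ V \ A, 0 < c - f x := by
    intro x hx
    rw [Finset.mem_sdiff] at hx
    refine sub_pos.2 (lt_of_le_of_ne (hc x (hVP x hx.1)) fun h => hx.2 ((hA x).2 ⟨hx.1, ?_⟩))
    rw [hFeq]
    exact ⟨hVP x hx.1, h⟩
  -- The largest ratio is the tilt at which the hyperplane first meets a vertex outside `F`.
  obtain ⟨z, hz, hzmax⟩ := Finset.exists_max_image (V \ A)
    (fun x => (ψ p - ψ x) / (c - f x)) hVA
  set t := (ψ p - ψ z) / (c - f z) with ht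
  have hzV : z ∈ V := (Finset.mem_sdiff.1 hz).1
  have hzP := hVP z hzV
  have hzpos := hpos z hz
  have htz : t * (c - f z) = ψ p - ψ z := div_mul_cancel₀ _ hzpos.ne'
  set f' : (Fin n → ℝ) →ₗ[ℝ] ℝ := t • f - ψ with hf'
  set c' : ℝ := t * c - ψ p with hc'
  have hf'x : ∀ x, f' x = t * f x - ψ x := fun x => by simp [hf']
  have hle : ∀ x ∈ P, f' x ≤ c' := by
    rw [hPV]
    refine le_on_convexHull f' c' fun x hx => ?_
    rw [hf'x]
    by_cases hxA : x ∈ A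
    · have h1 := hAf x hxA
      by_cases hxv : x = v
      · rw [h1, hxv, hψv]
        linarith
      · rw [h1, hψR x (Finset.mem_erase.2 ⟨hxv, hxA⟩)]
    · have hx' : x ∈ V \ A := Finset.mem_sdiff.2 ⟨hx, hxA⟩
      have h1 := hzmax x hx'
      rw [div_le_iff₀ (hpos x hx')] at h1
      linarith
  have hf'R : ∀ x ∈ R, f' x = c' := fun x hx => by
    rw [hf'x, hAf x (hRA x hx), hψR x hx]
  have hf'z : f' z = c' := by
    rw [hf'x]
    linarith
  have hf'v : f' v + 1 = c' := by
    rw [hf'x, hAf v hv, hψv]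
    linarith
  set F' := {x ∈ P | f' x = c'} with hF'
  have hRF' : (R : Set (Fin n → ℝ)) ⊆ F' := fun x hx => ⟨hAP x (hRA x hx), hf'R x hx⟩
  have hzF' : z ∈ F' := ⟨hzP, hf'z⟩
  have hzF : z ∉ F := fun h => hzpos.ne' (sub_eq_zero.2 (hFf z h).symm)
  have hF'facet : IsFacet P F' := by
    refine ⟨Or.inr (Or.inr ⟨f', c', hle, rfl⟩), ⟨z, hzF'⟩, ?_⟩
    have h1 : sdim F' < sdim P :=
      sdim_lt_of_const (fun x hx => hx.1) f' c' (fun x hx => hx.2) hzP (hAP v hv)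
        (by linarith)
    have h2 : sdim (R : Set (Fin n → ℝ)) < sdim F' :=
      sdim_lt_of_const hRF' f c (fun x hx => hAf x (hRA x hx)) hzF' (hRF' hp)
        (by
          rw [hAf p (hRA p hp)]
          linarith)
    omega
  refine ⟨F', hF'facet, fun h => hzF (h ▸ hzF'), hRF', ?_⟩
  intro F'' hF'' hne hRF''
  obtain ⟨f₂, c₂, hc₂, hF''eq⟩ := hF''.exists_functional
  have hf₂R : ∀ x ∈ R, f₂ x = c₂ := fun x hx => by
    have := hRF'' (Finset.mem_coe.2 hx)
    rw [hF''eq] at this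
    exact this.2
  -- On `P`, the third supporting functional is a nonnegative combination of the first two.
  set a := c₂ - f₂ v with ha
  set b := (c₂ - f₂ z) / (c - f z) with hb
  have ha0 : 0 ≤ a := sub_nonneg.2 (hc₂ v (hAP v hv))
  have hb0 : 0 ≤ b := div_nonneg (sub_nonneg.2 (hc₂ z hzP)) hzpos.le
  have hbz : b * (c - f z) = c₂ - f₂ z := div_mul_cancel₀ _ hzpos.ne'
  have hcomb : ∀ x ∈ P, f₂ x - a * f' x - b * f x = c₂ - a * c' - b * c := by
    have hk : ∀ x, (f₂ - a • f' - b • f) x = f₂ x - a * f' x - b * f x := fun x => by simp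
    intro x hx
    rw [← hk]
    refine hF.eq_on_of_eq hzP hzF _ _ ?_ ?_ x hx
    · rw [hFA]
      refine eq_on_convexHull _ _ fun y hy => ?_
      rw [hk, hAf y hy]
      by_cases hyv : y = v
      · rw [hyv, ← hf'v]
        linarith
      · have hyR : y ∈ R := Finset.mem_erase.2 ⟨hyv, hy⟩
        rw [hf'R y hyR, hf₂R y hyR]
    · rw [hk, hf'z]
      linarith
  have hF''P : F'' ⊆ P := hF''eq ▸ fun x hx => hx.1
  -- At a point of `F''` both nonnegative terms vanish.
  have hboth : ∀ x ∈ F'', a * (c' - f' x) = 0 ∧ b * (c - f x) = 0 := by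
    intro x hx
    have hxP := hF''P hx
    rw [hF''eq] at hx
    have h1 := hcomb x hxP
    have h2 := mul_nonneg ha0 (sub_nonneg.2 (hle x hxP))
    have h3 := mul_nonneg hb0 (sub_nonneg.2 (hc x hxP))
    have h4 := hx.2
    constructor <;> nlinarith
  by_cases hb1 : b = 0
  · by_cases ha1 : a = 0
    · -- Both coefficients vanish: the third functional is constant on `P`.
      exfalso
      have h1 : F'' = P := by
        refine Set.Subset.antisymm hF''P fun x hx => ?_
        rw [hF''eq]
        have h2 := hcomb x hx
        rw [ha1, hb1] at h2
        exact ⟨hx, by linarith⟩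
      have h3 := hF''.2.2
      rw [h1] at h3
      omega
    · refine hmax _ _ hF'' hF'facet fun x hx => ⟨hF''P hx, ?_⟩
      have := (mul_eq_zero.1 (hboth x hx).1).resolve_left ha1
      linarith
  · refine absurd (hmax _ _ hF'' hF fun x hx => ?_) hne
    rw [hFeq]
    have := (mul_eq_zero.1 (hboth x hx).2).resolve_left hb1
    exact ⟨hF''P hx, by linarith⟩

/-! ### Disjoint facets of simplicial polytopes -/

theorem stmt1 {n d : ℕ} (hd : 1 < d) (P : Set (Fin n → ℝ))
    (hP : IsPolytope P) (hdim : sdim P = d)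
    (hsimplicial : IsSimplicialPolytope P)
    (F G : Set (Fin n → ℝ)) (hF : IsFacet P F) (hG : IsFacet P G) (hFG : F ≠ G)
    (hdisj : ∀ v, IsVertex P v → ¬ (v ∈ F ∧ v ∈ G)) :
    ∃ F₁ G₁ F₂ G₂ : Set (Fin n → ℝ),
      IsFacet P F₁ ∧ IsFacet P G₁ ∧ IsFacet P F₂ ∧ IsFacet P G₂ ∧
      F₁ ≠ G₁ ∧ F₁ ≠ F₂ ∧ F₁ ≠ G₂ ∧ G₁ ≠ F₂ ∧ G₁ ≠ G₂ ∧ F₂ ≠ G₂ ∧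
      (∀ v, IsVertex P v → ¬ (v ∈ F₁ ∧ v ∈ G₁)) ∧
      (∀ v, IsVertex P v → ¬ (v ∈ F₂ ∧ v ∈ G₂)) := by
  classical
  obtain ⟨V, hPV, hV⟩ := hP.exists_vertices
  set vs : Set (Fin n → ℝ) → Finset (Fin n → ℝ) := fun E => V.filter (fun x => x ∈ E) with hvs
  have hmem : ∀ E x, x ∈ vs E ↔ x ∈ V ∧ x ∈ E := fun E x => Finset.mem_filter
  have hvscard : ∀ E, IsFacet P E → (vs E).card = d := by
    intro E hE
    have h1 := hsimplicial E hE
    have h2 : {v | IsVertex P v ∧ v ∈ E} = (vs E : Set (Fin n → ℝ)) := by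
      ext x
      rw [Finset.mem_coe, hmem, ← hV]
      rfl
    rw [h2, Set.ncard_coe_finset, hdim] at h1
    exact h1
  have hinj : ∀ E₁ E₂, IsFacet P E₁ → IsFacet P E₂ → vs E₁ = vs E₂ → E₁ = E₂ := by
    have key : ∀ E, IsFacet P E → E = convexHull ℝ (vs E : Set (Fin n → ℝ)) := by
      intro E hE
      have h1 := hE.1
      rw [hPV] at h1
      have h2 := h1.eq_convexHull
      have h3 : {x | x ∈ V ∧ x ∈ E} = (vs E : Set (Fin n → ℝ)) := by
        ext x
        exact (hmem E x).symm
      rwa [h3] at h2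
    intro E₁ E₂ h₁ h₂ h
    rw [key E₁ h₁, key E₂ h₂, h]
  have hmax : ∀ E₁ E₂, IsFacet P E₁ → IsFacet P E₂ → E₁ ⊆ E₂ → E₁ = E₂ := by
    intro E₁ E₂ h₁ h₂ h
    refine hinj _ _ h₁ h₂ (Finset.eq_of_subset_of_card_le (fun x hx => ?_) ?_)
    · rw [hmem] at hx ⊢
      exact ⟨hx.1, h hx.2⟩
    · rw [hvscard _ h₁, hvscard _ h₂]
  set C : Finset (Finset (Fin n → ℝ)) :=
    V.powerset.filter (fun A => ∃ E, IsFacet P E ∧ vs E = A) with hC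
  have hmemC : ∀ A, A ∈ C ↔ ∃ E, IsFacet P E ∧ vs E = A := by
    intro A
    rw [hC, Finset.mem_filter, Finset.mem_powerset]
    refine ⟨fun h => h.2, fun h => ⟨?_, h⟩⟩
    obtain ⟨E, -, rfl⟩ := h
    exact Finset.filter_subset _ _
  have hCcard : ∀ A ∈ C, A.card = d := by
    intro A hA
    obtain ⟨E, hE, rfl⟩ := (hmemC A).1 hA
    exact hvscard E hE
  have heven : ∀ R : Finset (Fin n → ℝ), R.card + 1 = d →
      Even (C.filter (fun A => R ⊆ A)).card := by
    intro R hR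
    rcases (C.filter (fun A => R ⊆ A)).eq_empty_or_nonempty with h0 | ⟨A, hA⟩
    · rw [h0]
      simp
    rw [Finset.mem_filter, hmemC] at hA
    obtain ⟨⟨E, hE, rfl⟩, hRE⟩ := hA
    obtain ⟨v, hv, hvR⟩ : ∃ v ∈ vs E, v ∉ R := by
      by_contra! h
      have h1 := Finset.card_le_card (show vs E ⊆ R from h)
      rw [hvscard E hE] at h1
      omega
    have hReq : R = (vs E).erase v := by
      refine Finset.eq_of_subset_of_card_le
        (fun x hx => Finset.mem_erase.2 ⟨fun h => hvR (h ▸ hx), hRE hx⟩) ?_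
      have h1 := Finset.card_erase_add_one hv
      rw [hvscard E hE] at h1
      omega
    obtain ⟨E', hE', hne, hsub, huniq⟩ :=
      hE.exists_unique_neighbour hd hPV hdim hmax (hmem E) (hvscard E hE) hv
    rw [← hReq] at hsub huniq
    have hpair : C.filter (fun A => R ⊆ A) = {vs E, vs E'} := by
      ext A
      rw [Finset.mem_filter, hmemC, Finset.mem_insert, Finset.mem_singleton]
      constructor
      · rintro ⟨⟨E'', hE'', rfl⟩, hRE''⟩
        by_cases h : E'' = E
        · exact Or.inl (by rw [h])
        · refine Or.inr ?_
          rw [huniq E'' hE'' h fun x hx => ((hmem _ _).1 (hRE'' hx)).2]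
      · rintro (rfl | rfl)
        · exact ⟨⟨E, hE, rfl⟩, hRE⟩
        · exact ⟨⟨E', hE', rfl⟩, fun x hx =>
            (hmem _ _).2 ⟨((hmem _ _).1 (hRE hx)).1, hsub (Finset.mem_coe.2 hx)⟩⟩
    rw [hpair, Finset.card_pair fun h => hne (hinj _ _ hE' hE h.symm)]
    exact even_two
  have hdis : Disjoint (vs F) (vs G) := by
    rw [Finset.disjoint_left]
    intro x hxF hxG
    rw [hmem] at hxF hxG
    exact hdisj x ((hV x).2 hxF.1) ⟨hxF.2, hxG.2⟩
  have hback : ∀ E₁ E₂, Disjoint (vs E₁) (vs E₂) → ∀ v, IsVertex P v → ¬ (v ∈ E₁ ∧ v ∈ E₂) := by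
    intro E₁ E₂ h v hv hvE
    have hvV := (hV v).1 hv
    exact Finset.disjoint_left.1 h ((hmem _ _).2 ⟨hvV, hvE.1⟩) ((hmem _ _).2 ⟨hvV, hvE.2⟩)
  obtain ⟨A₁, hA₁, B₁, hB₁, A₂, hA₂, B₂, hB₂, h₁, h₂, n₁, n₂, n₃, n₄, n₅, n₆⟩ :=
    exists_two_pairs hd C hCcard heven ((hmemC _).2 ⟨F, hF, rfl⟩) ((hmemC _).2 ⟨G, hG, rfl⟩) hdis
  obtain ⟨F₁, hF₁, rfl⟩ := (hmemC _).1 hA₁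
  obtain ⟨G₁, hG₁, rfl⟩ := (hmemC _).1 hB₁
  obtain ⟨F₂, hF₂, rfl⟩ := (hmemC _).1 hA₂
  obtain ⟨G₂, hG₂, rfl⟩ := (hmemC _).1 hB₂
  exact ⟨F₁, G₁, F₂, G₂, hF₁, hG₁, hF₂, hG₂, ne_of_apply_ne vs n₁, ne_of_apply_ne vs n₂,
    ne_of_apply_ne vs n₃, ne_of_apply_ne vs n₄, ne_of_apply_ne vs n₅, ne_of_apply_ne vs n₆,
    hback _ _ h₁, hback _ _ h₂⟩
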